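/- (Approximation guarantee of local search, core of Theorem 4.1.) Let $A \in \mathbb{R}^{m \times n}$, let $\lambda_1 \ge \cdots \ge \lambda_m \ge 0$ be the eigenvalues of $AA^T$, let $1 \le k \le m$ with $\sum_{t=k}^m \lambda_t > 0$, let $\epsilon > 0$, and define $\kappa = \lambda_1 \Big/ \left( \frac{1}{m-k+1} \sum_{t=k}^m \lambda_t \right)$. Let $S \subseteq [m]$ with $|S| = k$, $\det(A_S A_S^T) > 0$, and suppose for all $i \in S$, $j \notin S$ that $\det(A_{(S \setminus \{i\}) \cup \{j\}} A_{(S \setminus \{i\}) \cup \{j\}}^T) \le (1 + \epsilon/k) \det(A_S A_S^T)$. Then $\det(A_S A_S^T) \ge \left(1 + \frac{\epsilon}{k}\right)^{-k} \kappa^{-k} \max_{S' \subseteq [m],\, |S'| = k} \det(A_{S'} A_{S'}^T)$. -/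

import Mathlib

namespace Matrix

variable {ι : Type*} [DecidableEq ι]

/-- The principal submatrix of `L` indexed by the finite set `S`. -/
abbrev principal (L : Matrix ι ι ℝ) (S : Finset ι) : Matrix {x // x ∈ S} {x // x ∈ S} ℝ :=
  L.submatrix (fun i => i.1) (fun j => j.1)

/-- The diagonal of the Schur complement of the principal submatrix `L_T` in `L`. -/
noncomputable def schurDiag (L : Matrix ι ι ℝ) (T : Finset ι) (j : ι) : ℝ :=
  L j j - (L.submatrix id (fun a : {x // x ∈ T} => a.1) * (L.principal T)⁻¹ *
    L.submatrix (fun a : {x // x ∈ T} => a.1) id) j j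

/-- Hadamard-type bound, by the AM-GM inequality on the eigenvalues. -/
theorem PosSemidef.det_le_pow_of_diag_le [Fintype ι] {M : Matrix ι ι ℝ} (hM : M.PosSemidef) {c : ℝ}
    (hc : ∀ i, M i i ≤ c) : M.det ≤ c ^ Fintype.card ι := by
  rcases isEmpty_or_nonempty ι with h | h
  · simp
  have hcard : (0 : ℝ) < Fintype.card ι := by exact_mod_cast Fintype.card_pos
  have hnn := hM.eigenvalues_nonneg
  have hdet : M.det = ∏ i, hM.1.eigenvalues i := by simpa using hM.1.det_eq_prod_eigenvalues
  have htr : M.trace = ∑ i, hM.1.eigenvalues i := by simpa using hM.1.trace_eq_sum_eigenvalues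
  have amgm := Real.geom_mean_le_arith_mean Finset.univ (fun _ : ι => (1 : ℝ))
    hM.1.eigenvalues (fun _ _ => zero_le_one) (by simpa using hcard) (fun i _ => hnn i)
  simp only [Real.rpow_one, one_mul, Finset.sum_const, Finset.card_univ, nsmul_eq_mul,
    mul_one, ← hdet, ← htr] at amgm
  have htrc : M.trace ≤ Fintype.card ι * c := by
    simpa [trace] using Finset.sum_le_sum fun i (_ : i ∈ Finset.univ) => hc i
  have hroot : M.det ^ (Fintype.card ι : ℝ)⁻¹ ≤ c :=
    amgm.trans ((div_le_iff₀' hcard).2 htrc)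
  calc M.det = (M.det ^ (Fintype.card ι : ℝ)⁻¹) ^ Fintype.card ι :=
        (Real.rpow_inv_natCast_pow hM.det_nonneg Fintype.card_ne_zero).symm
    _ ≤ c ^ Fintype.card ι := by
        have := hM.det_nonneg
        gcongr

theorem IsHermitian.eq_mul_diagonal_mul_transpose [Fintype ι] {L : Matrix ι ι ℝ}
    (hL : L.IsHermitian) :
    ∃ U : Matrix ι ι ℝ, U * Uᵀ = 1 ∧ L = U * diagonal hL.eigenvalues * Uᵀ := by
  refine ⟨hL.eigenvectorUnitary, ?_, ?_⟩
  · simpa [star_eq_conjTranspose] using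
      (Unitary.coe_mul_star_self hL.eigenvectorUnitary)
  · conv_lhs => rw [hL.spectral_theorem, Unitary.conjStarAlgAut_apply]
    simp [star_eq_conjTranspose]

theorem IsHermitian.diag_le_of_eigenvalues_le [Fintype ι] {L : Matrix ι ι ℝ}
    (hL : L.IsHermitian) {c : ℝ} (hc : ∀ t, hL.eigenvalues t ≤ c) (i : ι) : L i i ≤ c := by
  obtain ⟨U, hU, hLU⟩ := hL.eq_mul_diagonal_mul_transpose
  have hsum : ∑ t, U i t * U i t = 1 := by
    simpa [mul_apply] using congrFun (congrFun hU i) i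
  have hLi : L i i = ∑ t, U i t * hL.eigenvalues t * U i t := by
    conv_lhs => rw [hLU, mul_apply]
    simp [mul_diagonal]
  calc L i i = ∑ t, hL.eigenvalues t * (U i t * U i t) := by
        rw [hLi]; exact Finset.sum_congr rfl fun t _ => by ring
    _ ≤ ∑ t, c * (U i t * U i t) :=
        Finset.sum_le_sum fun t _ => mul_le_mul_of_nonneg_right (hc t) (mul_self_nonneg _)
    _ = c := by rw [← Finset.mul_sum, hsum, mul_one]

/-- The trace of a Schur complement is a sum of eigenvalues of `L`, weighted by the diagonal of
an orthogonal projection whose kernel has dimension `|T|`. -/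
theorem PosSemidef.exists_weights_sum_schurDiag [Fintype ι] {L : Matrix ι ι ℝ}
    (hL : L.PosSemidef) (T : Finset ι) (hT : IsUnit (L.principal T).det) :
    ∃ w : ι → ℝ, (∀ t, 0 ≤ w t) ∧ (∀ t, w t ≤ 1) ∧
      ∑ t, w t = Fintype.card ι - T.card ∧
      ∑ j, L.schurDiag T j = ∑ t, w t * hL.1.eigenvalues t := by
  obtain ⟨U, hU, hLU⟩ := hL.1.eq_mul_diagonal_mul_transpose
  have hU' : Uᵀ * U = 1 := mul_eq_one_comm.1 hU
  set d := hL.1.eigenvalues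
  have hd : diagonal d = diagonal (fun t => √(d t)) * diagonal (fun t => √(d t)) := by
    rw [diagonal_mul_diagonal]
    congr 1; funext t
    exact (Real.mul_self_sqrt (hL.eigenvalues_nonneg t)).symm
  set B : Matrix ι ι ℝ := diagonal (fun t => √(d t)) * Uᵀ with hB
  have hBL : Bᵀ * B = L := by
    rw [hLU, hd, hB, transpose_mul, transpose_transpose, diagonal_transpose]
    simp only [Matrix.mul_assoc]
  have hBD : B * Bᵀ = diagonal d := by
    rw [hd, hB, transpose_mul, transpose_transpose, diagonal_transpose, Matrix.mul_assoc,
      ← Matrix.mul_assoc Uᵀ, hU', Matrix.one_mul]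
  set C : Matrix ι {x // x ∈ T} ℝ := B.submatrix id (fun a => a.1) with hC
  have hCC : Cᵀ * C = L.principal T := by
    rw [← hBL]; ext a b; simp [hC, mul_apply]
  have hBC : Bᵀ * C = L.submatrix id (fun a => a.1) := by
    rw [← hBL]; ext a b; simp [hC, mul_apply]
  have hCB : Cᵀ * B = L.submatrix (fun a => a.1) id := by
    rw [← hBL]; ext a b; simp [hC, mul_apply]
  set K := L.principal T with hK
  have hKsymm : Kᵀ = K := by
    rw [← hCC, transpose_mul, transpose_transpose]
  set Q : Matrix ι ι ℝ := C * K⁻¹ * Cᵀ with hQ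
  have hQsymm : Qᵀ = Q := by
    simp [hQ, transpose_nonsing_inv, hKsymm, Matrix.mul_assoc]
  have hQQ : Q * Q = Q := by
    calc Q * Q = C * K⁻¹ * (Cᵀ * C) * K⁻¹ * Cᵀ := by simp only [hQ, Matrix.mul_assoc]
      _ = Q := by rw [hCC, nonsing_inv_mul_cancel_right _ _ hT]
  have hQtr : ∑ t, Q t t = T.card := by
    have : Q.trace = T.card := by
      rw [hQ, trace_mul_comm, ← Matrix.mul_assoc, hCC, mul_nonsing_inv _ hT]
      simp
    simpa [trace] using this
  have hQdiag (t : ι) : Q t t = ∑ s, Q t s * Q t s := by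
    conv_lhs => rw [← hQQ, mul_apply]
    refine Finset.sum_congr rfl fun s _ => ?_
    rw [show Q s t = Q t s from congrFun (congrFun hQsymm t) s]
  have hQnn (t : ι) : 0 ≤ Q t t := by
    rw [hQdiag]; exact Finset.sum_nonneg fun s _ => mul_self_nonneg _
  have hQle (t : ι) : Q t t ≤ 1 := by
    have h : Q t t * Q t t ≤ Q t t := by
      conv_rhs => rw [hQdiag]
      exact Finset.single_le_sum (f := fun s => Q t s * Q t s)
        (fun s _ => mul_self_nonneg _) (Finset.mem_univ t)
    by_contra! hlt
    nlinarith
  refine ⟨fun t => 1 - Q t t, fun t => sub_nonneg.2 (hQle t),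
    fun t => sub_le_self _ (hQnn t), by simp [Finset.sum_sub_distrib, hQtr], ?_⟩
  have hproj : (L.submatrix id (fun a : {x // x ∈ T} => a.1) * K⁻¹ *
      L.submatrix (fun a : {x // x ∈ T} => a.1) id).trace = ∑ t, Q t t * d t := by
    rw [← hBC, ← hCB]
    calc (Bᵀ * C * K⁻¹ * (Cᵀ * B)).trace = (Bᵀ * (Q * B)).trace := by
          simp only [hQ, Matrix.mul_assoc]
      _ = (Q * diagonal d).trace := by rw [trace_mul_comm, Matrix.mul_assoc, hBD]
      _ = ∑ t, Q t t * d t := by simp [trace, mul_diagonal]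
  have htr : L.trace = ∑ t, d t := by simpa using hL.1.trace_eq_sum_eigenvalues
  simp only [schurDiag, Finset.sum_sub_distrib, sub_mul, one_mul, ← hproj, ← htr, ← hK]
  rfl

theorem schurDiag_eq_zero {L : Matrix ι ι ℝ} {T : Finset ι}
    (hT : IsUnit (L.principal T).det) {j : ι} (hj : j ∈ T) : L.schurDiag T j = 0 := by
  have h : (L.principal T * (L.principal T)⁻¹ * L.principal T) ⟨j, hj⟩ ⟨j, hj⟩ = L j j := by
    rw [mul_nonsing_inv _ hT, Matrix.one_mul]; rfl
  rw [schurDiag, sub_eq_zero, ← h]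
  rfl

/-- Adjoining one element to `T` splits the index type of the principal submatrix. -/
def insertEquivSum {T : Finset ι} {j : ι} (hj : j ∉ T) :
    {x // x ∈ insert j T} ≃ {x // x ∈ T} ⊕ Unit :=
  (Finset.subtypeInsertEquivOption hj).trans (Equiv.optionEquivSumPUnit _)

@[simp]
theorem insertEquivSum_symm_inl {T : Finset ι} {j : ι} (hj : j ∉ T) (a : {x // x ∈ T}) :
    ((insertEquivSum hj).symm (Sum.inl a)).1 = a.1 := rfl

@[simp]
theorem insertEquivSum_symm_inr {T : Finset ι} {j : ι} (hj : j ∉ T) (u : Unit) :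
    ((insertEquivSum hj).symm (Sum.inr u)).1 = j := rfl

theorem det_principal_insert {L : Matrix ι ι ℝ} {T : Finset ι}
    (hT : IsUnit (L.principal T).det) {j : ι} (hj : j ∉ T) :
    (L.principal (insert j T)).det = (L.principal T).det * L.schurDiag T j := by
  have hblocks : (L.principal (insert j T)).submatrix (insertEquivSum hj).symm
      (insertEquivSum hj).symm = fromBlocks (L.principal T)
        (L.submatrix (fun a : {x // x ∈ T} => a.1) (fun _ : Unit => j))
        (L.submatrix (fun _ : Unit => j) (fun a : {x // x ∈ T} => a.1))
        (L.submatrix (fun _ : Unit => j) (fun _ : Unit => j)) := by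
    ext (a | a) (b | b) <;> simp
  let := invertibleOfIsUnitDet _ hT
  rw [← det_submatrix_equiv_self (insertEquivSum hj).symm, hblocks, det_fromBlocks₁₁,
    invOf_eq_nonsing_inv, det_unique (n := Unit)]
  rfl

theorem adjugate_principal_insert_self (L : Matrix ι ι ℝ) {T : Finset ι} {j : ι} (hj : j ∉ T) :
    (L.principal (insert j T)).adjugate ⟨j, Finset.mem_insert_self j T⟩
      ⟨j, Finset.mem_insert_self j T⟩ = (L.principal T).det := by
  have hblocks : ((L.principal (insert j T)).updateRow ⟨j, Finset.mem_insert_self j T⟩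
      (Pi.single ⟨j, Finset.mem_insert_self j T⟩ 1)).submatrix (insertEquivSum hj).symm
      (insertEquivSum hj).symm = fromBlocks (L.principal T)
        (L.submatrix (fun a : {x // x ∈ T} => a.1) (fun _ : Unit => j)) 0 1 := by
    have hne (a : {x // x ∈ T}) : a.1 ≠ j := fun h => hj (h ▸ a.2)
    ext (a | a) (b | b) <;>
      simp [updateRow_apply, Pi.single_apply, Subtype.ext_iff, hne]
  rw [adjugate_apply, ← det_submatrix_equiv_self (insertEquivSum hj).symm, hblocks,
    det_fromBlocks_zero₂₁, det_one, mul_one]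

/-- If removing any single index divides the principal minor by at least `c`, then the minor is
at least `c ^ |S|`. -/
theorem PosDef.pow_card_le_det_principal {L : Matrix ι ι ℝ} {S : Finset ι}
    (hS : (L.principal S).PosDef) {c : ℝ} (hc : 0 < c)
    (h : ∀ i ∈ S, c * (L.principal (S.erase i)).det ≤ (L.principal S).det) :
    c ^ S.card ≤ (L.principal S).det := by
  have hdiag (i : {x // x ∈ S}) : (L.principal S)⁻¹ i i ≤ c⁻¹ := by
    obtain ⟨i, hi⟩ := i
    have hadj : (L.principal S).adjugate ⟨i, hi⟩ ⟨i, hi⟩ = (L.principal (S.erase i)).det := by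
      have hins := Finset.insert_erase hi
      have := L.adjugate_principal_insert_self (Finset.notMem_erase i S)
      rw [← this]
      congr! <;> simp [hins]
    rw [inv_def, smul_apply, hadj, Ring.inverse_eq_inv', smul_eq_mul, inv_mul_le_iff₀ hS.det_pos,
      ← div_eq_mul_inv, le_div_iff₀' hc]
    exact h i hi
  have hle := hS.inv.posSemidef.det_le_pow_of_diag_le hdiag
  rw [det_nonsing_inv, Ring.inverse_eq_inv', inv_pow, Fintype.card_coe] at hle
  exact (inv_le_inv₀ hS.det_pos (pow_pos hc _)).1 hle

end Matrix

/-- Fractional weights cannot beat the integral choice of the `m - k + 1` smallest values. -/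
theorem Antitone.sum_tail_le_sum_mul {m k : ℕ} {lam : Fin m → ℝ} (hmono : Antitone lam)
    (hk1 : 1 ≤ k) (hk2 : k ≤ m) {w : Fin m → ℝ} (hw0 : ∀ t, 0 ≤ w t) (hw1 : ∀ t, w t ≤ 1)
    (hw : ∑ t, w t = m - k + 1) :
    ∑ t ∈ Finset.univ.filter (fun t : Fin m => k ≤ (t : ℕ) + 1), lam t ≤ ∑ t, w t * lam t := by
  have hkm : k - 1 < m := by omega
  set c := lam ⟨k - 1, hkm⟩
  have hcard : ∑ t : Fin m, (if k ≤ (t : ℕ) + 1 then (1 : ℝ) else 0) = m - k + 1 := by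
    have hIci : (Finset.univ.filter fun t : Fin m => k ≤ (t : ℕ) + 1) =
        Finset.Ici ⟨k - 1, hkm⟩ := by
      ext t
      simp only [Finset.mem_filter, Finset.mem_univ, true_and, Finset.mem_Ici, Fin.le_def]
      omega
    rw [Finset.sum_boole, hIci, Fin.card_Ici, Nat.cast_sub hkm.le, Nat.cast_sub hk1]
    push_cast; ring
  have hterm : ∀ t ∈ (Finset.univ : Finset (Fin m)),
      0 ≤ (w t - if k ≤ (t : ℕ) + 1 then 1 else 0) * (lam t - c) := by
    intro t _
    split_ifs with ht
    · exact mul_nonneg_of_nonpos_of_nonpos (sub_nonpos.2 (hw1 t))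
        (sub_nonpos.2 (hmono (Fin.le_def.2 (by simp only; omega))))
    · exact mul_nonneg (by simpa using hw0 t)
        (sub_nonneg.2 (hmono (Fin.le_def.2 (by simp only; omega))))
  have hnn := Finset.sum_nonneg hterm
  simp only [mul_sub, Finset.sum_sub_distrib, ← Finset.sum_mul, hw, hcard, sub_self, zero_mul,
    sub_zero] at hnn
  simp only [sub_mul, Finset.sum_sub_distrib, ite_mul, one_mul, zero_mul] at hnn
  rw [Finset.sum_filter]
  linarith


open scoped Matrix

/-- `det(A_S A_S^T)`, i.e. the determinant of the principal submatrix `(AA^T)_{S,S}`. -/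
noncomputable def subDet {m n : ℕ} (A : Matrix (Fin m) (Fin n) ℝ) (S : Finset (Fin m)) : ℝ :=
  Matrix.det ((A * Aᵀ).submatrix (fun i : {x // x ∈ S} => i.1) (fun j : {x // x ∈ S} => j.1))

/-- approximation guarantee of local search: let `λ₁ ≥ ⋯ ≥ λ_m ≥ 0` be the
eigenvalues of `AA^T` (here `lam`, an antitone enumeration of the eigenvalues, so the largest
eigenvalue `λ₁` is `lam 0`), `1 ≤ k ≤ m` with `∑_{t=k}^m λ_t > 0`, `ε > 0`, and
`κ = λ₁ / ((1/(m-k+1)) ∑_{t=k}^m λ_t)`. If `S` has `|S| = k`, `det(A_S A_S^T) > 0`, and every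
single-element swap improves the determinant by at most a `(1 + ε/k)` factor, then
`det(A_S A_S^T) ≥ (1 + ε/k)⁻ᵏ κ⁻ᵏ max_{|S'| = k} det(A_{S'} A_{S'}^T)`
(stated for every `S'` with `|S'| = k`, equivalently for the maximum over such `S'`). -/
theorem statement15 {m n : ℕ} (A : Matrix (Fin m) (Fin n) ℝ)
    (hH : (A * Aᵀ).IsHermitian)
    (lam : Fin m → ℝ) (hmono : Antitone lam) (hnn : ∀ t, 0 ≤ lam t)
    (hperm : ∃ σ : Equiv.Perm (Fin m), ∀ t, lam t = hH.eigenvalues (σ t))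
    (k : ℕ) (hk1 : 1 ≤ k) (hk2 : k ≤ m)
    (hsum : 0 < ∑ t ∈ Finset.univ.filter (fun t : Fin m => k ≤ (t : ℕ) + 1), lam t)
    (ε : ℝ) (hε : 0 < ε)
    (S : Finset (Fin m)) (hS : S.card = k) (hpos : 0 < subDet A S)
    (hloc : ∀ i ∈ S, ∀ j ∉ S,
      subDet A (insert j (S.erase i)) ≤ (1 + ε / k) * subDet A S) :
    ∀ S' : Finset (Fin m), S'.card = k →
      ((1 + ε / k) ^ k)⁻¹ *
          ((lam ⟨0, lt_of_lt_of_le hk1 hk2⟩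
              / ((∑ t ∈ Finset.univ.filter (fun t : Fin m => k ≤ (t : ℕ) + 1), lam t)
                  / ((m - k + 1 : ℕ) : ℝ))) ^ k)⁻¹ *
          subDet A S'
        ≤ subDet A S := by
  intro S' hS'
  obtain ⟨σ, hσ⟩ := hperm
  set L := A * Aᵀ with hLdef
  have hL : L.PosSemidef := by
    simpa using Matrix.posSemidef_self_mul_conjTranspose A
  set tail := ∑ t ∈ Finset.univ.filter (fun t : Fin m => k ≤ (t : ℕ) + 1), lam t
  set top := lam ⟨0, lt_of_lt_of_le hk1 hk2⟩ with htop
  have hdim : (0 : ℝ) < ((m - k + 1 : ℕ) : ℝ) := by positivity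
  have hfac : 0 < 1 + ε / k := by positivity
  have hSpd : (L.principal S).PosDef :=
    (hL.submatrix _).posDef_iff_isUnit.2
      ((Matrix.isUnit_iff_isUnit_det _).2 (isUnit_iff_ne_zero.2 hpos.ne'))
  have hlower : (tail / (m - k + 1 : ℕ) / (1 + ε / k)) ^ k ≤ subDet A S := by
    rw [← hS]
    refine hSpd.pow_card_le_det_principal (by rw [hS]; positivity) fun i hi => ?_
    rw [hS]
    set T := S.erase i with hTdef
    have hTcard : T.card + 1 = k := by rw [← hS, Finset.card_erase_add_one hi]
    have hTpd : (L.principal T).PosDef :=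
      hSpd.submatrix (e := fun a : {x // x ∈ T} => ⟨a.1, Finset.mem_of_mem_erase a.2⟩)
        fun a b hab => Subtype.ext (congrArg (fun z => z.1) hab)
    have hTunit : IsUnit (L.principal T).det := isUnit_iff_ne_zero.2 hTpd.det_pos.ne'
    obtain ⟨w, hw0, hw1, hw, hwsum⟩ := hL.exists_weights_sum_schurDiag T hTunit
    have htail : tail ≤ ∑ j, L.schurDiag T j := by
      rw [hwsum, ← Equiv.sum_comp σ]
      simp only [← hσ]
      refine hmono.sum_tail_le_sum_mul hk1 hk2 (fun t => hw0 _) (fun t => hw1 _) ?_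
      rw [Equiv.sum_comp σ w, hw, Fintype.card_fin, ← hTcard]
      push_cast; ring
    have hbound : ∀ j ∈ Finset.univ \ T,
        (L.principal T).det * L.schurDiag T j ≤ (1 + ε / k) * subDet A S := by
      intro j hj
      have hjT : j ∉ T := (Finset.mem_sdiff.1 hj).2
      rw [← Matrix.det_principal_insert hTunit hjT]
      by_cases hjS : j ∈ S
      · have hji : j = i := by
          by_contra hne
          exact hjT (Finset.mem_erase.2 ⟨hne, hjS⟩)
        rw [hji, hTdef, Finset.insert_erase hi]
        exact le_mul_of_one_le_left hpos.le (le_add_of_nonneg_right (by positivity))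
      · exact hloc i hi j hjS
    have hsplit : ∑ j ∈ Finset.univ \ T, L.schurDiag T j = ∑ j, L.schurDiag T j :=
      Finset.sum_subset (Finset.subset_univ _) fun j _ hj =>
        Matrix.schurDiag_eq_zero hTunit (by simpa using hj)
    have hcompl : (Finset.univ \ T).card = m - k + 1 := by
      rw [Finset.card_sdiff_of_subset (Finset.subset_univ _), Finset.card_univ, Fintype.card_fin]
      omega
    have hmain : tail * (L.principal T).det ≤
        (m - k + 1 : ℕ) * ((1 + ε / k) * subDet A S) := by
      calc tail * (L.principal T).det
          ≤ (L.principal T).det * ∑ j ∈ Finset.univ \ T, L.schurDiag T j := by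
            rw [hsplit, mul_comm]
            exact mul_le_mul_of_nonneg_left htail hTpd.det_pos.le
        _ ≤ (m - k + 1 : ℕ) * ((1 + ε / k) * subDet A S) := by
            rw [Finset.mul_sum, ← hcompl, ← nsmul_eq_mul]
            exact Finset.sum_le_card_nsmul _ _ _ hbound
    change _ ≤ subDet A S
    rw [div_div, div_mul_eq_mul_div, div_le_iff₀ (mul_pos hdim hfac)]
    linarith
  have hupper : subDet A S' ≤ top ^ k := by
    have hdiag := hH.diag_le_of_eigenvalues_le (c := top) fun t => by
      rw [← σ.apply_symm_apply t, ← hσ]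
      exact hmono (Fin.le_def.2 (Nat.zero_le _))
    have h := (hL.submatrix fun i : {x // x ∈ S'} => i.1).det_le_pow_of_diag_le
      (c := top) fun i => hdiag i.1
    rwa [Fintype.card_coe, hS'] at h
  have htop_pos : 0 < top := by
    refine lt_of_le_of_ne (hnn _) fun h0 => hsum.not_ge (Finset.sum_nonpos fun t _ => ?_)
    exact (hmono (Fin.le_def.2 (Nat.zero_le _))).trans h0.ge
  refine le_trans ?_ hlower
  calc ((1 + ε / k) ^ k)⁻¹ * ((top / (tail / (m - k + 1 : ℕ))) ^ k)⁻¹ * subDet A S'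
      ≤ ((1 + ε / k) ^ k)⁻¹ * ((top / (tail / (m - k + 1 : ℕ))) ^ k)⁻¹ * top ^ k := by
        gcongr
    _ = (tail / (m - k + 1 : ℕ) / (1 + ε / k)) ^ k := by
        rw [← inv_pow, ← inv_pow, ← mul_pow, ← mul_pow]
        congr 1
        field_simp
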